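/- (A₂ theorem for sparse operators, Cruz-Uribe–Martell–Pérez.) There is an absolute constant C > 0 such that for every 0 < η < 1, every η-sparse family S of standard dyadic cubes in ℝ^d, every weight w on ℝ^d with [w]_{A_2} < ∞ (and w^{-1} locally integrable), every f ∈ L²(w) and g ∈ L²(w^{-1}), one has ∑_{Q∈S} ⟨|f|⟩_Q · ⟨|g|⟩_Q · |Q| ≤ (C/η) · [w]_{A_2} · ‖f‖_{L²(w)} · ‖g‖_{L²(w^{-1})}. Consequently the sparse operator A_S satisfies ‖A_S f‖_{L²(w)} ≤ (C/η)[w]_{A_2}‖f‖_{L²(w)}. -/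

import Mathlib

/-!
Put `σ = w⁻¹ dx` and `ω = w dx`. Passing to weighted averages, `⟨f⟩_Q ⟨g⟩_Q` becomes
`⟨f w⟩_Q^σ ⟨g w⁻¹⟩_Q^ω ⟨w⟩_Q ⟨w⁻¹⟩_Q`, and the `A₂` condition bounds the last two factors by
`[w]_{A₂}`. Sparsity then bounds `η ∑_Q ⟨f w⟩_Q^σ ⟨g w⁻¹⟩_Q^ω |Q|` by
`∫ M^σ(f w) M^ω(g w⁻¹) dx`, where `M^σ` and `M^ω` are the maximal functions along the family with
respect to `σ` and `ω`. Since dyadic cubes are nested, both are bounded by `2` on `L²` of their own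
measure, whatever the weight, so the Cauchy–Schwarz inequality finishes the bilinear estimate with
constant `4`. Testing that estimate on `g = w A_S|f|` gives the operator bound.
-/

open MeasureTheory ENNReal

noncomputable section

/-- The standard dyadic cube of generation `j` indexed by `k ∈ ℤ^d`. -/
def dyadicCube (d : ℕ) (j : ℤ) (k : Fin d → ℤ) : Set (Fin d → ℝ) :=
  {x | ∀ i, (k i : ℝ) * (2:ℝ) ^ (-j) ≤ x i ∧ x i < ((k i : ℝ) + 1) * (2:ℝ) ^ (-j)}

/-- The standard dyadic cube with parameter pair `q = (j, k)`. -/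
def dCube (d : ℕ) (q : ℤ × (Fin d → ℤ)) : Set (Fin d → ℝ) := dyadicCube d q.1 q.2

/-- A family `S` of standard dyadic cubes (given by parameters) is `η`-sparse if there are
pairwise disjoint measurable sets `E_Q ⊆ Q`, `Q ∈ S`, with `|E_Q| ≥ η |Q|`. -/
def IsSparse (d : ℕ) (η : ℝ) (S : Set (ℤ × (Fin d → ℤ))) : Prop :=
  ∃ E : {q // q ∈ S} → Set (Fin d → ℝ),
    (∀ q, MeasurableSet (E q)) ∧ (∀ q, E q ⊆ dCube d q.1) ∧
    (∀ q r, q ≠ r → Disjoint (E q) (E r)) ∧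
    (∀ q, ENNReal.ofReal η * volume (dCube d q.1) ≤ volume (E q))

/-- An axis-parallel cube in `ℝ^d`. -/
def IsCube {d : ℕ} (Q : Set (Fin d → ℝ)) : Prop :=
  ∃ (a : Fin d → ℝ) (l : ℝ), 0 < l ∧ Q = {x | ∀ i, a i ≤ x i ∧ x i < a i + l}

/-- The average of `f` over the set `Q` (with respect to Lebesgue measure). -/
def avg {d : ℕ} (Q : Set (Fin d → ℝ)) (f : (Fin d → ℝ) → ℝ) : ℝ :=
  (volume Q).toReal⁻¹ * ∫ x in Q, f x

/-- A weight: locally integrable and a.e. positive. -/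
def IsWeight {d : ℕ} (w : (Fin d → ℝ) → ℝ) : Prop :=
  MeasureTheory.LocallyIntegrable w volume ∧
    ∀ᵐ x ∂(volume : Measure (Fin d → ℝ)), 0 < w x

/-- The `A₂` characteristic `[w]_{A₂} = sup_Q ⟨w⟩_Q ⟨w⁻¹⟩_Q` over all axis-parallel cubes. -/
def a2Const (d : ℕ) (w : (Fin d → ℝ) → ℝ) : ℝ≥0∞ :=
  ⨆ Q : {Q : Set (Fin d → ℝ) // IsCube Q},
    ENNReal.ofReal (avg Q.1 w * avg Q.1 (fun x => (w x)⁻¹))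

/-- Weighted `L^p` norm `(∫ |f|^p w)^(1/p)`. -/
def wLpNorm {d : ℕ} (p : ℝ) (w f : (Fin d → ℝ) → ℝ) : ℝ≥0∞ :=
  (∫⁻ x, ENNReal.ofReal |f x| ^ p * ENNReal.ofReal (w x)) ^ (1/p)

/-- The sparse operator `A_S f = ∑_{Q ∈ S} ⟨f⟩_Q 1_Q` (pointwise sum). -/
def sparseOp (d : ℕ) (S : Set (ℤ × (Fin d → ℤ))) (f : (Fin d → ℝ) → ℝ)
    (x : Fin d → ℝ) : ℝ :=
  ∑' q : {q // q ∈ S}, avg (dCube d q.1) f * (dCube d q.1).indicator (fun _ => (1:ℝ)) x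

section Lebesgue

variable {α ι : Type*} [MeasurableSpace α] {μ ν : Measure α}

theorem rpow_one_div_le_of_le_mul_rpow_one_div {p q : ℝ} (hpq : p.HolderConjugate q)
    {a c : ℝ≥0∞} (ha : a ≠ ∞) (h : a ≤ c * a ^ (1 / q)) : a ^ (1 / p) ≤ c := by
  rcases eq_or_ne a 0 with rfl | h0
  · simp [hpq.pos]
  have hsplit : a ^ (1 / p) * a ^ (1 / q) = a := by
    rw [← ENNReal.rpow_add _ _ h0 ha, one_div, one_div, hpq.inv_add_inv_eq_one, ENNReal.rpow_one]
  have hne : a ^ (1 / q) ≠ 0 := by simp [h0, ha]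
  have hne_top : a ^ (1 / q) ≠ ∞ := ENNReal.rpow_ne_top_of_nonneg (by simp [hpq.symm.nonneg]) ha
  exact (ENNReal.mul_le_mul_iff_left hne hne_top).1 (hsplit.trans_le h)

theorem le_ofReal_div_mul_of_ofReal_mul_le {c η : ℝ} (hη : 0 < η) {X Y : ℝ≥0∞}
    (h : ENNReal.ofReal η * X ≤ ENNReal.ofReal c * Y) : X ≤ ENNReal.ofReal (c / η) * Y := by
  rw [ENNReal.ofReal_div_of_pos hη, ← ENNReal.mul_div_right_comm,
    ENNReal.le_div_iff_mul_le (.inl (ENNReal.ofReal_pos.2 hη).ne') (.inl ENNReal.ofReal_ne_top)]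
  rwa [mul_comm]

theorem eLpNorm_two_eq_lintegral (F : α → ℝ≥0∞) :
    eLpNorm F 2 μ = (∫⁻ x, F x ^ (2 : ℝ) ∂μ) ^ (1 / 2 : ℝ) := by
  simp [eLpNorm_eq_lintegral_rpow_enorm_toReal two_ne_zero ofNat_ne_top]

theorem lintegral_mul_self_eq_eLpNorm_two_mul_self (F : α → ℝ≥0∞) :
    ∫⁻ x, F x * F x ∂μ = eLpNorm F 2 μ * eLpNorm F 2 μ := by
  rw [eLpNorm_two_eq_lintegral, ← ENNReal.rpow_add_of_nonneg _ _ (by norm_num) (by norm_num)]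
  norm_num [sq]

theorem lintegral_mul_le_eLpNorm_two_mul_eLpNorm_two {F G : α → ℝ≥0∞}
    (hF : AEMeasurable F μ) (hG : AEMeasurable G μ) :
    ∫⁻ x, F x * G x ∂μ ≤ eLpNorm F 2 μ * eLpNorm G 2 μ := by
  simpa only [eLpNorm_two_eq_lintegral, Pi.mul_apply] using
    ENNReal.lintegral_mul_le_Lp_mul_Lq μ Real.HolderConjugate.two_two hF hG

theorem eLpNorm_tsum_eq_iSup_eLpNorm_sum [Countable ι] {p : ℝ≥0∞} (hp : p ≠ 0) (hp' : p ≠ ∞)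
    {u : ι → α → ℝ≥0∞} (hu : ∀ i, AEMeasurable (u i) μ) :
    eLpNorm (fun x => ∑' i, u i x) p μ =
      ⨆ T : Finset ι, eLpNorm (fun x => ∑ i ∈ T, u i x) p μ := by
  have hr : 0 < p.toReal := ENNReal.toReal_pos hp hp'
  have hsup (x : α) : (∑' i, u i x) ^ p.toReal = ⨆ T : Finset ι, (∑ i ∈ T, u i x) ^ p.toReal := by
    rw [ENNReal.tsum_eq_iSup_sum]
    exact (ENNReal.orderIsoRpow _ hr).map_iSup _
  simp only [eLpNorm_eq_lintegral_rpow_enorm_toReal hp hp', enorm_eq_self, hsup]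
  rw [lintegral_iSup_directed]
  · exact (ENNReal.orderIsoRpow _ (one_div_pos.2 hr)).map_iSup _
  · exact fun T => (Finset.aemeasurable_fun_sum T fun i _ => hu i).pow_const _
  · refine Monotone.directed_le fun T T' hT x => ?_
    dsimp only
    gcongr

/-- By the layer cake formula, both sides are integrals over `t` of level-set measures weighted
by `t ^ (p - 2)`. -/
theorem lintegral_rpow_le_of_mul_meas_lt_le {p q : ℝ} (hpq : p.HolderConjugate q)
    {f : α → ℝ≥0∞} (hf : Measurable f) (hf_top : ∀ x, f x ≠ ∞)
    (h : ∀ t : ℝ≥0∞, t * μ {x | t < f x} ≤ ν {x | t < f x}) :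
    ∫⁻ x, f x ^ p ∂μ ≤ ENNReal.ofReal q * ∫⁻ x, f x ^ (p - 1) ∂ν := by
  have hcake (ρ : Measure α) {r : ℝ} (hr : 0 < r) : ∫⁻ x, f x ^ r ∂ρ = ENNReal.ofReal r *
      ∫⁻ t in Set.Ioi 0, ρ {x | ENNReal.ofReal t < f x} * ENNReal.ofReal (t ^ (r - 1)) := by
    have hcake' := lintegral_rpow_eq_lintegral_meas_lt_mul ρ (f := fun x => (f x).toReal)
      (.of_forall fun x => ENNReal.toReal_nonneg) hf.ennreal_toReal.aemeasurable hr
    have hpow (x : α) : ENNReal.ofReal ((f x).toReal ^ r) = f x ^ r := by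
      rw [← ENNReal.ofReal_rpow_of_nonneg ENNReal.toReal_nonneg hr.le,
        ENNReal.ofReal_toReal (hf_top x)]
    simp only [hpow] at hcake'
    rw [hcake']
    congr 1
    refine setLIntegral_congr_fun measurableSet_Ioi fun t ht => ?_
    simp only [ENNReal.ofReal_lt_iff_lt_toReal (Set.mem_Ioi.1 ht).le (hf_top _)]
  have hlevel {t : ℝ} (ht : 0 < t) :
      μ {x | ENNReal.ofReal t < f x} * ENNReal.ofReal (t ^ (p - 1)) ≤
        ν {x | ENNReal.ofReal t < f x} * ENNReal.ofReal (t ^ (p - 1 - 1)) := by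
    have hsplit : t ^ (p - 1) = t * t ^ (p - 1 - 1) := by
      rw [Real.rpow_sub_one ht.ne' (p - 1)]
      field_simp
    rw [hsplit, ENNReal.ofReal_mul ht.le, ← mul_assoc, mul_comm (μ _)]
    gcongr
    exact h _
  have hconst : ENNReal.ofReal p = ENNReal.ofReal q * ENNReal.ofReal (p - 1) := by
    rw [← ENNReal.ofReal_mul hpq.symm.nonneg, mul_comm, hpq.sub_one_mul_conj]
  rw [hcake μ hpq.pos, hcake ν hpq.sub_one_pos, ← mul_assoc, ← hconst]
  gcongr ENNReal.ofReal p * ?_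
  exact setLIntegral_mono' measurableSet_Ioi fun t ht => hlevel ht

theorem memLp_sum_indicator_const {p : ℝ≥0∞} (T : Finset ι) {Q : ι → Set α}
    (hQ : ∀ q, MeasurableSet (Q q)) (hfin : ∀ q, μ (Q q) ≠ ∞) {c : ι → ℝ≥0∞}
    (hc : ∀ q, c q ≠ ∞) : MemLp (fun x => ∑ q ∈ T, (Q q).indicator (fun _ => c q) x) p μ := by
  refine memLp_finsetSum T fun q _ => ⟨?_, (eLpNorm_indicator_const_le (c q) p).trans_lt ?_⟩
  · exact (measurable_const.indicator (hQ q)).aestronglyMeasurable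
  · exact ENNReal.mul_lt_top (hc q).lt_top
      (ENNReal.rpow_lt_top_of_nonneg (by positivity) (hfin q))

end Lebesgue

section Maximal

variable {α ι : Type*}

/-- A laminar (nested) family of sets: any two members are comparable or disjoint, as for dyadic
cubes. -/
def IsLaminar (Q : ι → Set α) : Prop :=
  ∀ q r, Q q ⊆ Q r ∨ Q r ⊆ Q q ∨ Disjoint (Q q) (Q r)

/-- Discard, one at a time, the sets contained in another remaining one. -/
theorem IsLaminar.exists_pairwiseDisjoint_biUnion_eq {Q : ι → Set α} (hQ : IsLaminar Q)
    (T : Finset ι) :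
    ∃ U ⊆ T, (U : Set ι).PairwiseDisjoint Q ∧ ⋃ q ∈ U, Q q = ⋃ q ∈ T, Q q := by
  classical
  induction T using Finset.strongInduction with | H T ih => ?_
  by_cases hT : (T : Set ι).PairwiseDisjoint Q
  · exact ⟨T, subset_rfl, hT, rfl⟩
  obtain ⟨q, hq, r, hr, hqr, hsub⟩ : ∃ q ∈ T, ∃ r ∈ T, q ≠ r ∧ Q q ⊆ Q r := by
    simp only [Set.PairwiseDisjoint, Set.Pairwise, Finset.mem_coe, not_forall] at hT
    obtain ⟨q, hq, r, hr, hqr, hdisj⟩ := hT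
    rcases hQ q r with h | h | h
    · exact ⟨q, hq, r, hr, hqr, h⟩
    · exact ⟨r, hr, q, hq, hqr.symm, h⟩
    · exact absurd h hdisj
  obtain ⟨U, hUT, hU, hUnion⟩ := ih (T.erase q) (Finset.erase_ssubset hq)
  refine ⟨U, hUT.trans (T.erase_subset q), hU, hUnion.trans ?_⟩
  conv_rhs => rw [← Finset.insert_erase hq, Finset.set_biUnion_insert]
  refine (Set.union_eq_right.2 ?_).symm
  exact hsub.trans (Set.subset_biUnion_of_mem (u := Q) (Finset.mem_erase.2 ⟨hqr.symm, hr⟩))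

variable [MeasurableSpace α] {μ ν : Measure α} {Q : ι → Set α}

theorem IsLaminar.mul_measure_biUnion_le (hlam : IsLaminar Q) (hQ : ∀ q, MeasurableSet (Q q))
    (T : Finset ι) {t : ℝ≥0∞} (h : ∀ q ∈ T, t * μ (Q q) ≤ ν (Q q)) :
    t * μ (⋃ q ∈ T, Q q) ≤ ν (⋃ q ∈ T, Q q) := by
  obtain ⟨U, hUT, hU, hUnion⟩ := hlam.exists_pairwiseDisjoint_biUnion_eq T
  rw [← hUnion, measure_biUnion_finset hU fun q _ => hQ q,
    measure_biUnion_finset hU fun q _ => hQ q, Finset.mul_sum]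
  exact Finset.sum_le_sum fun q hq => h q (hUT hq)

/-- The maximal function of `F` with respect to the finite subfamily `T` of `Q`. -/
def finsetMaximal (μ : Measure α) (Q : ι → Set α) (T : Finset ι) (F : α → ℝ≥0∞) (x : α) : ℝ≥0∞ :=
  T.sup fun q => (Q q).indicator (fun _ => ⨍⁻ y in Q q, F y ∂μ) x

variable {T : Finset ι} {F : α → ℝ≥0∞}

theorem setLAverage_le_finsetMaximal {q : ι} (hq : q ∈ T) {x : α} (hx : x ∈ Q q) :
    ⨍⁻ y in Q q, F y ∂μ ≤ finsetMaximal μ Q T F x :=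
  (Set.indicator_of_mem hx _).symm.trans_le
    (Finset.le_sup (f := fun q => (Q q).indicator (fun _ => ⨍⁻ y in Q q, F y ∂μ) x) hq)

theorem setOf_lt_finsetMaximal (t : ℝ≥0∞) :
    {x | t < finsetMaximal μ Q T F x} =
      ⋃ q ∈ T.filter (fun q => t < ⨍⁻ y in Q q, F y ∂μ), Q q := by
  ext x
  simp only [finsetMaximal, Set.mem_ofPred_eq, Finset.lt_sup_iff, Finset.mem_filter,
    Set.mem_iUnion, exists_prop, and_assoc]
  refine exists_congr fun q => and_congr_right fun _ => ?_
  by_cases hx : x ∈ Q q <;> simp [hx]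

theorem measurable_finsetMaximal (hQ : ∀ q, MeasurableSet (Q q)) :
    Measurable (finsetMaximal μ Q T F) := by
  refine measurable_of_Ioi fun t => ?_
  change MeasurableSet {x | t < finsetMaximal μ Q T F x}
  rw [setOf_lt_finsetMaximal]
  exact Finset.measurableSet_biUnion _ fun q _ => hQ q

/-- Laminarity reduces the weak type bound to a single set of the family. -/
theorem mul_meas_lt_finsetMaximal_le (hQ : ∀ q, MeasurableSet (Q q))
    (hfin : ∀ q, μ (Q q) ≠ ∞) (hlam : IsLaminar Q) (t : ℝ≥0∞) :
    t * μ {x | t < finsetMaximal μ Q T F x} ≤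
      μ.withDensity F {x | t < finsetMaximal μ Q T F x} := by
  rw [setOf_lt_finsetMaximal]
  refine hlam.mul_measure_biUnion_le hQ _ fun q hq => ?_
  rw [withDensity_apply _ (hQ q), ← measure_mul_setLAverage _ (hfin q), mul_comm]
  gcongr
  exact (Finset.mem_filter.1 hq).2.le

theorem setLIntegral_ne_top_of_lintegral_rpow_ne_top {p : ℝ} (hp : 1 ≤ p) {s : Set α}
    (hs : μ s ≠ ∞) (hF : ∫⁻ x, F x ^ p ∂μ ≠ ∞) : ∫⁻ x in s, F x ∂μ ≠ ∞ := by
  have hpt (x : α) : F x ≤ 1 + F x ^ p := by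
    rcases le_total (F x) 1 with h | h
    · exact h.trans le_self_add
    · exact (ENNReal.le_rpow_self_of_one_le h hp).trans le_add_self
  refine ne_top_of_le_ne_top (ENNReal.add_ne_top.2 ⟨hs, hF⟩) ?_
  calc ∫⁻ x in s, F x ∂μ ≤ ∫⁻ x in s, (1 + F x ^ p) ∂μ := lintegral_mono hpt
    _ = μ s + ∫⁻ x in s, F x ^ p ∂μ := by
      rw [lintegral_add_left measurable_const, setLIntegral_one]
    _ ≤ μ s + ∫⁻ x, F x ^ p ∂μ := by gcongr; exact Measure.restrict_le_self

theorem finsetMaximal_ne_top (hF : ∀ q, ∫⁻ x in Q q, F x ∂μ ≠ ∞) (x : α) :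
    finsetMaximal μ Q T F x ≠ ∞ := by
  refine ((Finset.sup_lt_iff ENNReal.zero_lt_top).2 fun q _ => ?_).ne
  exact (Set.indicator_le_self _ _ _).trans_lt (setLAverage_lt_top (hF q))

theorem finsetMaximal_le_sum_indicator (x : α) :
    finsetMaximal μ Q T F x ≤ ∑ q ∈ T, (Q q).indicator (fun _ => ⨍⁻ y in Q q, F y ∂μ) x :=
  Finset.sup_le fun _ hq => Finset.single_le_sum_of_canonicallyOrdered
    (f := fun q => (Q q).indicator (fun _ => ⨍⁻ y in Q q, F y ∂μ) x) hq

theorem lintegral_finsetMaximal_rpow_ne_top (hQ : ∀ q, MeasurableSet (Q q))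
    (hfin : ∀ q, μ (Q q) ≠ ∞) (hF : ∀ q, ∫⁻ x in Q q, F x ∂μ ≠ ∞) {p : ℝ} (hp : 0 < p) :
    ∫⁻ x, finsetMaximal μ Q T F x ^ p ∂μ ≠ ∞ := by
  have hLp := memLp_sum_indicator_const (p := ENNReal.ofReal p) T hQ hfin
    fun q => (setLAverage_lt_top (hF q)).ne
  have hsum := lintegral_rpow_enorm_lt_top_of_eLpNorm_lt_top (ENNReal.ofReal_pos.2 hp).ne'
    ENNReal.ofReal_ne_top hLp.2
  simp only [ENNReal.toReal_ofReal hp.le, enorm_eq_self] at hsum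
  refine ne_top_of_le_ne_top hsum.ne (lintegral_mono fun x => ?_)
  gcongr
  exact finsetMaximal_le_sum_indicator x

theorem lintegral_finsetMaximal_rpow_le (hQ : ∀ q, MeasurableSet (Q q))
    (hfin : ∀ q, μ (Q q) ≠ ∞) (hlam : IsLaminar Q) {p q : ℝ} (hpq : p.HolderConjugate q)
    (hF : AEMeasurable F μ) :
    (∫⁻ x, finsetMaximal μ Q T F x ^ p ∂μ) ^ (1 / p) ≤
      ENNReal.ofReal q * (∫⁻ x, F x ^ p ∂μ) ^ (1 / p) := by
  by_cases htop : ∫⁻ x, F x ^ p ∂μ = ∞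
  · simp [htop, ENNReal.top_rpow_of_pos (inv_pos.2 hpq.pos), hpq.symm.pos]
  have hint (r : ι) : ∫⁻ x in Q r, F x ∂μ ≠ ∞ :=
    setLIntegral_ne_top_of_lintegral_rpow_ne_top hpq.lt.le (hfin r) htop
  set M := finsetMaximal μ Q T F
  have hM : Measurable M := measurable_finsetMaximal hQ
  refine rpow_one_div_le_of_le_mul_rpow_one_div hpq
    (lintegral_finsetMaximal_rpow_ne_top hQ hfin hint hpq.pos) ?_
  calc ∫⁻ x, M x ^ p ∂μ
      ≤ ENNReal.ofReal q * ∫⁻ x, M x ^ (p - 1) ∂μ.withDensity F :=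
        lintegral_rpow_le_of_mul_meas_lt_le hpq hM (finsetMaximal_ne_top hint)
          (mul_meas_lt_finsetMaximal_le hQ hfin hlam)
    _ = ENNReal.ofReal q * ∫⁻ x, F x * M x ^ (p - 1) ∂μ := by
      rw [lintegral_withDensity_eq_lintegral_mul₀ hF (hM.pow_const _).aemeasurable]
      rfl
    _ ≤ ENNReal.ofReal q * ((∫⁻ x, F x ^ p ∂μ) ^ (1 / p) *
          (∫⁻ x, (M x ^ (p - 1)) ^ q ∂μ) ^ (1 / q)) := by
      gcongr
      exact ENNReal.lintegral_mul_le_Lp_mul_Lq μ hpq hF (hM.pow_const _).aemeasurable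
    _ = ENNReal.ofReal q * (∫⁻ x, F x ^ p ∂μ) ^ (1 / p) * (∫⁻ x, M x ^ p ∂μ) ^ (1 / q) := by
      simp only [← ENNReal.rpow_mul, hpq.sub_one_mul_conj, mul_assoc]

theorem eLpNorm_two_finsetMaximal_le (hQ : ∀ q, MeasurableSet (Q q)) (hfin : ∀ q, μ (Q q) ≠ ∞)
    (hlam : IsLaminar Q) (hF : AEMeasurable F μ) :
    eLpNorm (finsetMaximal μ Q T F) 2 μ ≤ 2 * eLpNorm F 2 μ := by
  simpa only [eLpNorm_two_eq_lintegral, ENNReal.ofReal_ofNat] using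
    lintegral_finsetMaximal_rpow_le hQ hfin hlam Real.HolderConjugate.two_two hF

end Maximal

section SparseFamily

variable {α ι : Type*} [MeasurableSpace α] {μ : Measure α} {Q : ι → Set α} {η : ℝ≥0∞}

/-- An `η`-sparse family of arbitrary sets: its members have pairwise disjoint measurable portions
of relative measure at least `η`. -/
def IsSparseFamily (μ : Measure α) (η : ℝ≥0∞) (Q : ι → Set α) : Prop :=
  ∃ E : ι → Set α, (∀ q, MeasurableSet (E q)) ∧ (∀ q, E q ⊆ Q q) ∧
    Pairwise (Function.onFun Disjoint E) ∧ ∀ q, η * μ (Q q) ≤ μ (E q)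

theorem IsSparseFamily.mul_sum_mul_measure_le_lintegral (hQ : IsSparseFamily μ η Q) (T : Finset ι)
    {a : ι → ℝ≥0∞} {K : α → ℝ≥0∞} (hK : ∀ q ∈ T, ∀ x ∈ Q q, a q ≤ K x) :
    η * ∑ q ∈ T, a q * μ (Q q) ≤ ∫⁻ x, K x ∂μ := by
  obtain ⟨E, hE, hEQ, hdisj, hη⟩ := hQ
  calc η * ∑ q ∈ T, a q * μ (Q q)
      = ∑ q ∈ T, a q * (η * μ (Q q)) := by
        rw [Finset.mul_sum]
        exact Finset.sum_congr rfl fun q _ => mul_left_comm _ _ _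
    _ ≤ ∑ q ∈ T, a q * μ (E q) := by gcongr with q; exact hη q
    _ = ∑ q ∈ T, ∫⁻ _ in E q, a q ∂μ := by simp only [setLIntegral_const]
    _ ≤ ∑ q ∈ T, ∫⁻ x in E q, K x ∂μ :=
        Finset.sum_le_sum fun q hq =>
          setLIntegral_mono' (hE q) fun x hx => hK q hq x (hEQ q hx)
    _ = ∫⁻ x in ⋃ q ∈ T, E q, K x ∂μ :=
        (lintegral_biUnion_finset (hdisj.set_pairwise _) (fun q _ => hE q) K).symm
    _ ≤ ∫⁻ x, K x ∂μ := setLIntegral_le_lintegral _ _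

end SparseFamily

section DualWeights

variable {α : Type*} [MeasurableSpace α] {μ : Measure α} {W V : α → ℝ≥0∞}

/-- A pair of mutually inverse weights, as `w` and `w⁻¹` in the `A₂` condition. -/
structure IsDualWeightPair (μ : Measure α) (W V : α → ℝ≥0∞) : Prop where
  aemeasurable_left : AEMeasurable W μ
  aemeasurable_right : AEMeasurable V μ
  mul_eq_one : ∀ᵐ x ∂μ, W x * V x = 1

namespace IsDualWeightPair

theorem symm (h : IsDualWeightPair μ W V) : IsDualWeightPair μ V W where
  aemeasurable_left := h.aemeasurable_right
  aemeasurable_right := h.aemeasurable_left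
  mul_eq_one := h.mul_eq_one.mono fun x hx => by rw [mul_comm, hx]

theorem restrict (h : IsDualWeightPair μ W V) (s : Set α) :
    IsDualWeightPair (μ.restrict s) W V where
  aemeasurable_left := h.aemeasurable_left.restrict
  aemeasurable_right := h.aemeasurable_right.restrict
  mul_eq_one := ae_restrict_of_ae h.mul_eq_one

theorem lintegral_withDensity_left (h : IsDualWeightPair μ W V) (F : α → ℝ≥0∞) :
    ∫⁻ x, F x ∂μ.withDensity W = ∫⁻ x, F x * W x ∂μ := by
  have hW_top : ∀ᵐ x ∂μ, W x < ∞ := h.mul_eq_one.mono fun x hx =>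
    ENNReal.lt_top_of_mul_ne_top_left (hx.trans_ne ENNReal.one_ne_top)
      (right_ne_zero_of_mul (hx.trans_ne one_ne_zero))
  rw [lintegral_withDensity_eq_lintegral_mul_non_measurable₀ μ h.aemeasurable_left hW_top]
  simp only [Pi.mul_apply, mul_comm]

theorem lintegral_mul_withDensity_right (h : IsDualWeightPair μ W V) (F : α → ℝ≥0∞) :
    ∫⁻ x, F x * W x ∂μ.withDensity V = ∫⁻ x, F x ∂μ := by
  rw [h.symm.lintegral_withDensity_left]
  refine lintegral_congr_ae ?_
  filter_upwards [h.mul_eq_one] with x hx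
  rw [mul_assoc, hx, mul_one]

theorem eLpNorm_two_mul_withDensity_right (h : IsDualWeightPair μ W V) (F : α → ℝ≥0∞) :
    eLpNorm (fun x => F x * W x) 2 (μ.withDensity V) = eLpNorm F 2 (μ.withDensity W) := by
  have hsq (x : α) : (F x * W x) ^ (2 : ℝ) = F x ^ (2 : ℝ) * W x * W x := by
    simp only [ENNReal.rpow_two]
    ring
  simp only [eLpNorm_two_eq_lintegral, hsq]
  rw [h.lintegral_mul_withDensity_right, h.lintegral_withDensity_left]

theorem lintegral_mul_le (h : IsDualWeightPair μ W V) {F G : α → ℝ≥0∞} (hF : AEMeasurable F μ)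
    (hG : AEMeasurable G μ) :
    ∫⁻ x, F x * G x ∂μ ≤
      eLpNorm F 2 (μ.withDensity W) * eLpNorm G 2 (μ.withDensity V) := by
  have hac := withDensity_absolutelyContinuous μ W
  calc ∫⁻ x, F x * G x ∂μ
      = ∫⁻ x, F x * (G x * V x) ∂μ.withDensity W := by
        simp only [← mul_assoc, h.symm.lintegral_mul_withDensity_right]
    _ ≤ eLpNorm F 2 (μ.withDensity W) * eLpNorm (fun x => G x * V x) 2 (μ.withDensity W) :=
        lintegral_mul_le_eLpNorm_two_mul_eLpNorm_two (hF.mono_ac hac)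
          ((hG.mul h.aemeasurable_right).mono_ac hac)
    _ = eLpNorm F 2 (μ.withDensity W) * eLpNorm G 2 (μ.withDensity V) := by
        rw [h.symm.eLpNorm_two_mul_withDensity_right]

theorem setLAverage_eq_mul_setLAverage (h : IsDualWeightPair μ W V) (F : α → ℝ≥0∞) {s : Set α}
    (hs : MeasurableSet s) (hV : ∫⁻ x in s, V x ∂μ ≠ ∞) :
    ⨍⁻ x in s, F x ∂μ =
      (⨍⁻ x in s, F x * W x ∂μ.withDensity V) * ⨍⁻ x in s, V x ∂μ := by
  have hσ : μ.withDensity V s = ∫⁻ x in s, V x ∂μ := withDensity_apply V hs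
  have hF : ∫⁻ x in s, F x ∂μ = ∫⁻ x in s, F x * W x ∂μ.withDensity V := by
    rw [restrict_withDensity hs, (h.restrict s).lintegral_mul_withDensity_right]
  rw [setLAverage_eq μ F, setLAverage_eq μ V, ← mul_div_assoc, hF, ← hσ, mul_comm,
    measure_mul_setLAverage _ (hσ.trans_ne hV)]

end IsDualWeightPair

end DualWeights

section SparseBound

variable {α ι : Type*} [MeasurableSpace α] {μ : Measure α} {W V : α → ℝ≥0∞} {Q : ι → Set α}
  {A η : ℝ≥0∞}

/-- Dual weights, integrable on each set of the family `Q`, whose `A₂` characteristic relative to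
this family is at most `A`. -/
structure IsA2Pair (μ : Measure α) (Q : ι → Set α) (W V : α → ℝ≥0∞) (A : ℝ≥0∞) : Prop
    extends IsDualWeightPair μ W V where
  setLIntegral_left_ne_top : ∀ q, ∫⁻ x in Q q, W x ∂μ ≠ ∞
  setLIntegral_right_ne_top : ∀ q, ∫⁻ x in Q q, V x ∂μ ≠ ∞
  setLAverage_mul_setLAverage_le : ∀ q, (⨍⁻ x in Q q, W x ∂μ) * (⨍⁻ x in Q q, V x ∂μ) ≤ A

namespace IsA2Pair

theorem symm (h : IsA2Pair μ Q W V A) : IsA2Pair μ Q V W A where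
  toIsDualWeightPair := h.toIsDualWeightPair.symm
  setLIntegral_left_ne_top := h.setLIntegral_right_ne_top
  setLIntegral_right_ne_top := h.setLIntegral_left_ne_top
  setLAverage_mul_setLAverage_le q := by
    rw [mul_comm]
    exact h.setLAverage_mul_setLAverage_le q

theorem withDensity_left_ne_top (h : IsA2Pair μ Q W V A) (hQ : ∀ q, MeasurableSet (Q q)) (q : ι) :
    μ.withDensity W (Q q) ≠ ∞ := by
  rw [withDensity_apply W (hQ q)]
  exact h.setLIntegral_left_ne_top q

theorem eLpNorm_two_finsetMaximal_mul_le (h : IsA2Pair μ Q W V A)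
    (hQ : ∀ q, MeasurableSet (Q q)) (hlam : IsLaminar Q) (T : Finset ι) {F : α → ℝ≥0∞}
    (hF : AEMeasurable F μ) :
    eLpNorm (finsetMaximal (μ.withDensity V) Q T fun x => F x * W x) 2 (μ.withDensity V) ≤
      2 * eLpNorm F 2 (μ.withDensity W) := by
  rw [← h.eLpNorm_two_mul_withDensity_right]
  exact eLpNorm_two_finsetMaximal_le hQ (h.symm.withDensity_left_ne_top hQ) hlam
    ((hF.mul h.aemeasurable_left).mono_ac (withDensity_absolutelyContinuous μ V))

theorem setLAverage_mul_setLAverage_le_weighted (h : IsA2Pair μ Q W V A)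
    (hQ : ∀ q, MeasurableSet (Q q)) (F G : α → ℝ≥0∞) (q : ι) :
    (⨍⁻ x in Q q, F x ∂μ) * (⨍⁻ x in Q q, G x ∂μ) ≤
      A * ((⨍⁻ x in Q q, F x * W x ∂μ.withDensity V) *
        ⨍⁻ x in Q q, G x * V x ∂μ.withDensity W) := by
  rw [h.setLAverage_eq_mul_setLAverage F (hQ q) (h.setLIntegral_right_ne_top q),
    h.toIsDualWeightPair.symm.setLAverage_eq_mul_setLAverage G (hQ q)
      (h.setLIntegral_left_ne_top q),
    mul_mul_mul_comm, mul_comm, mul_comm (⨍⁻ x in Q q, V x ∂μ)]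
  gcongr
  exact h.setLAverage_mul_setLAverage_le q

theorem mul_sum_setLAverage_mul_setLAverage_le (h : IsA2Pair μ Q W V A)
    (hQ : ∀ q, MeasurableSet (Q q)) (hlam : IsLaminar Q) (hS : IsSparseFamily μ η Q)
    (T : Finset ι) {F G : α → ℝ≥0∞} (hF : AEMeasurable F μ) (hG : AEMeasurable G μ) :
    η * ∑ q ∈ T, (⨍⁻ x in Q q, F x ∂μ) * (⨍⁻ x in Q q, G x ∂μ) * μ (Q q) ≤
      4 * (A * eLpNorm F 2 (μ.withDensity W) * eLpNorm G 2 (μ.withDensity V)) := by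
  set a : ι → ℝ≥0∞ := fun q => ⨍⁻ x in Q q, F x * W x ∂μ.withDensity V
  set b : ι → ℝ≥0∞ := fun q => ⨍⁻ x in Q q, G x * V x ∂μ.withDensity W
  set M := finsetMaximal (μ.withDensity V) Q T fun x => F x * W x
  set N := finsetMaximal (μ.withDensity W) Q T fun x => G x * V x
  calc η * ∑ q ∈ T, (⨍⁻ x in Q q, F x ∂μ) * (⨍⁻ x in Q q, G x ∂μ) * μ (Q q)
      ≤ η * ∑ q ∈ T, A * (a q * b q) * μ (Q q) := by
        gcongr η * ∑ q ∈ T, ?_ * μ (Q q) with q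
        exact h.setLAverage_mul_setLAverage_le_weighted hQ F G q
    _ = A * (η * ∑ q ∈ T, a q * b q * μ (Q q)) := by
        simp only [mul_assoc A, ← Finset.mul_sum, mul_left_comm η]
    _ ≤ A * ∫⁻ x, M x * N x ∂μ := by
        gcongr
        exact hS.mul_sum_mul_measure_le_lintegral T fun q hq x hx =>
          mul_le_mul' (setLAverage_le_finsetMaximal hq hx) (setLAverage_le_finsetMaximal hq hx)
    _ ≤ A * (eLpNorm M 2 (μ.withDensity V) * eLpNorm N 2 (μ.withDensity W)) := by
        gcongr
        exact h.toIsDualWeightPair.symm.lintegral_mul_le (measurable_finsetMaximal hQ).aemeasurable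
          (measurable_finsetMaximal hQ).aemeasurable
    _ ≤ A * (2 * eLpNorm F 2 (μ.withDensity W) * (2 * eLpNorm G 2 (μ.withDensity V))) := by
        gcongr
        · exact h.eLpNorm_two_finsetMaximal_mul_le hQ hlam T hF
        · exact h.symm.eLpNorm_two_finsetMaximal_mul_le hQ hlam T hG
    _ = 4 * (A * eLpNorm F 2 (μ.withDensity W) * eLpNorm G 2 (μ.withDensity V)) := by ring

end IsA2Pair

theorem lintegral_sum_indicator_setLAverage_mul (hQ : ∀ q, MeasurableSet (Q q))
    (hfin : ∀ q, μ (Q q) ≠ ∞) (T : Finset ι) (F : α → ℝ≥0∞) {G : α → ℝ≥0∞}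
    (hG : AEMeasurable G μ) :
    ∫⁻ x, (∑ q ∈ T, (Q q).indicator (fun _ => ⨍⁻ y in Q q, F y ∂μ) x) * G x ∂μ =
      ∑ q ∈ T, (⨍⁻ x in Q q, F x ∂μ) * (⨍⁻ x in Q q, G x ∂μ) * μ (Q q) := by
  have hpt (q : ι) (x : α) : (Q q).indicator (fun _ => ⨍⁻ y in Q q, F y ∂μ) x * G x =
      (Q q).indicator (fun x => (⨍⁻ y in Q q, F y ∂μ) * G x) x := by
    by_cases hx : x ∈ Q q <;> simp [hx]
  simp only [Finset.sum_mul, hpt]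
  rw [lintegral_finsetSum' _ fun q _ => (hG.const_mul _).indicator (hQ q)]
  refine Finset.sum_congr rfl fun q _ => ?_
  rw [lintegral_indicator (hQ q), lintegral_const_mul'' _ hG.restrict, mul_assoc,
    mul_comm _ (μ (Q q)), measure_mul_setLAverage _ (hfin q)]

namespace IsA2Pair

/-- The bilinear bound tested on `G = H W`, where `H` is the sparse operator applied to `F`. -/
theorem mul_eLpNorm_sum_indicator_setLAverage_le (h : IsA2Pair μ Q W V A)
    (hQ : ∀ q, MeasurableSet (Q q)) (hfin : ∀ q, μ (Q q) ≠ ∞) (hlam : IsLaminar Q)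
    (hS : IsSparseFamily μ η Q) (T : Finset ι) {F : α → ℝ≥0∞} (hF : AEMeasurable F μ)
    (hF_int : ∀ q, ∫⁻ x in Q q, F x ∂μ ≠ ∞) :
    η * eLpNorm (fun x => ∑ q ∈ T, (Q q).indicator (fun _ => ⨍⁻ y in Q q, F y ∂μ) x) 2
      (μ.withDensity W) ≤ 4 * (A * eLpNorm F 2 (μ.withDensity W)) := by
  set H : α → ℝ≥0∞ := fun x => ∑ q ∈ T, (Q q).indicator (fun _ => ⨍⁻ y in Q q, F y ∂μ) x
  have hH : Measurable H :=
    Finset.measurable_fun_sum T fun q _ => measurable_const.indicator (hQ q)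
  have hHW : AEMeasurable (fun x => H x * W x) μ := hH.aemeasurable.mul h.aemeasurable_left
  have hH_top : eLpNorm H 2 (μ.withDensity W) ≠ ∞ :=
    (memLp_sum_indicator_const T hQ (h.withDensity_left_ne_top hQ)
      fun q => (setLAverage_lt_top (hF_int q)).ne).2.ne
  rcases eq_or_ne (eLpNorm H 2 (μ.withDensity W)) 0 with hH0 | hH0
  · simp [hH0]
  refine (ENNReal.mul_le_mul_iff_left hH0 hH_top).1 ?_
  calc η * eLpNorm H 2 (μ.withDensity W) * eLpNorm H 2 (μ.withDensity W)
      = η * ∫⁻ x, H x * (H x * W x) ∂μ := by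
        rw [mul_assoc, ← lintegral_mul_self_eq_eLpNorm_two_mul_self, h.lintegral_withDensity_left]
        simp only [mul_assoc]
    _ = η * ∑ q ∈ T, (⨍⁻ x in Q q, F x ∂μ) * (⨍⁻ x in Q q, H x * W x ∂μ) * μ (Q q) := by
        rw [lintegral_sum_indicator_setLAverage_mul hQ hfin T F hHW]
    _ ≤ 4 * (A * eLpNorm F 2 (μ.withDensity W) *
          eLpNorm (fun x => H x * W x) 2 (μ.withDensity V)) :=
        h.mul_sum_setLAverage_mul_setLAverage_le hQ hlam hS T hF hHW
    _ = 4 * (A * eLpNorm F 2 (μ.withDensity W)) * eLpNorm H 2 (μ.withDensity W) := by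
        simp only [h.eLpNorm_two_mul_withDensity_right, mul_assoc]

theorem setLIntegral_ne_top (h : IsA2Pair μ Q W V A) (hQ : ∀ q, MeasurableSet (Q q))
    {F : α → ℝ≥0∞} (hF_top : eLpNorm F 2 (μ.withDensity W) ≠ ∞) (q : ι) :
    ∫⁻ x in Q q, F x ∂μ ≠ ∞ := by
  rw [← h.eLpNorm_two_mul_withDensity_right, eLpNorm_two_eq_lintegral] at hF_top
  rw [← (h.restrict (Q q)).lintegral_mul_withDensity_right, ← restrict_withDensity (hQ q)]
  exact setLIntegral_ne_top_of_lintegral_rpow_ne_top one_le_two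
    (h.symm.withDensity_left_ne_top hQ q)
    (mt (fun h => by rw [h]; exact ENNReal.top_rpow_of_pos (by norm_num)) hF_top)

theorem mul_eLpNorm_tsum_indicator_setLAverage_le [Countable ι] (h : IsA2Pair μ Q W V A)
    (hQ : ∀ q, MeasurableSet (Q q)) (hfin : ∀ q, μ (Q q) ≠ ∞) (hlam : IsLaminar Q)
    (hS : IsSparseFamily μ η Q) {F : α → ℝ≥0∞} (hF : AEMeasurable F μ)
    (hF_top : eLpNorm F 2 (μ.withDensity W) ≠ ∞) :
    η * eLpNorm (fun x => ∑' q, (Q q).indicator (fun _ => ⨍⁻ y in Q q, F y ∂μ) x) 2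
      (μ.withDensity W) ≤ 4 * (A * eLpNorm F 2 (μ.withDensity W)) := by
  rw [eLpNorm_tsum_eq_iSup_eLpNorm_sum two_ne_zero ofNat_ne_top
    fun q => (measurable_const.indicator (hQ q)).aemeasurable, ENNReal.mul_iSup]
  exact iSup_le fun T => h.mul_eLpNorm_sum_indicator_setLAverage_le hQ hfin hlam hS T hF
    (h.setLIntegral_ne_top hQ hF_top)

end IsA2Pair

end SparseBound

section Dyadic

variable {d : ℕ} {η : ℝ} {S : Set (ℤ × (Fin d → ℤ))} {w f g : (Fin d → ℝ) → ℝ}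

theorem mem_dyadicCube_iff_floor_eq {j : ℤ} {k : Fin d → ℤ} {x : Fin d → ℝ} :
    x ∈ dyadicCube d j k ↔ ∀ i, ⌊x i * (2 : ℝ) ^ j⌋ = k i := by
  refine forall_congr' fun i => ?_
  have h2 : (0 : ℝ) < 2 ^ j := by positivity
  rw [Int.floor_eq_iff, zpow_neg, ← div_eq_mul_inv, ← div_eq_mul_inv, div_le_iff₀ h2,
    lt_div_iff₀ h2]

theorem dyadicCube_subset_or_disjoint {j j' : ℤ} (hj : j ≤ j') (k k' : Fin d → ℤ) :
    dyadicCube d j' k' ⊆ dyadicCube d j k ∨ Disjoint (dyadicCube d j' k') (dyadicCube d j k) := by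
  obtain ⟨n, rfl⟩ := Int.le.dest hj
  have hparent {y : Fin d → ℝ} (hy : y ∈ dyadicCube d (j + n) k') (i : Fin d) :
      ⌊y i * (2 : ℝ) ^ j⌋ = k' i / (2 ^ n : ℕ) := by
    rw [← mem_dyadicCube_iff_floor_eq.1 hy i, ← Int.floor_div_natCast, zpow_add₀ two_ne_zero]
    congr 1
    push_cast
    rw [zpow_natCast]
    field_simp
  rw [or_iff_not_imp_right, Set.not_disjoint_iff]
  rintro ⟨x, hx', hx⟩ y hy
  rw [mem_dyadicCube_iff_floor_eq] at hx ⊢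
  intro i
  rw [hparent hy i, ← hparent hx' i, hx i]

theorem isLaminar_dCube : IsLaminar fun q : S => dCube d q.1 := by
  rintro ⟨⟨j, k⟩, -⟩ ⟨⟨j', k'⟩, -⟩
  rcases le_total j j' with h | h
  · rcases dyadicCube_subset_or_disjoint h k k' with hsub | hdisj
    · exact .inr (.inl hsub)
    · exact .inr (.inr hdisj.symm)
  · rcases dyadicCube_subset_or_disjoint h k' k with hsub | hdisj
    · exact .inl hsub
    · exact .inr (.inr hdisj)

theorem dCube_eq_pi (q : ℤ × (Fin d → ℤ)) :
    dCube d q = Set.univ.pi fun i =>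
      Set.Ico ((q.2 i : ℝ) * (2 : ℝ) ^ (-q.1)) (((q.2 i : ℝ) + 1) * (2 : ℝ) ^ (-q.1)) := by
  ext x
  simp [dCube, dyadicCube]

theorem measurableSet_dCube (q : ℤ × (Fin d → ℤ)) : MeasurableSet (dCube d q) := by
  rw [dCube_eq_pi]
  exact MeasurableSet.univ_pi fun i => measurableSet_Ico

theorem isCube_dCube (q : ℤ × (Fin d → ℤ)) : IsCube (dCube d q) := by
  refine ⟨fun i => (q.2 i : ℝ) * (2 : ℝ) ^ (-q.1), (2 : ℝ) ^ (-q.1), by positivity, ?_⟩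
  simp only [dCube, dyadicCube, add_mul, one_mul]

theorem volume_dCube_ne_top (q : ℤ × (Fin d → ℤ)) : volume (dCube d q) ≠ ∞ := by
  rw [dCube_eq_pi, Real.volume_pi_Ico]
  exact ENNReal.prod_ne_top fun i _ => ENNReal.ofReal_ne_top

theorem integrableOn_dCube (hf : LocallyIntegrable f volume) (q : ℤ × (Fin d → ℤ)) :
    IntegrableOn f (dCube d q) := by
  rw [dCube_eq_pi]
  exact (hf.integrableOn_isCompact (isCompact_univ_pi fun i => isCompact_Icc)).mono_set
    (Set.pi_mono fun i _ => Set.Ico_subset_Icc_self)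

theorem isSparseFamily_dCube (hS : IsSparse d η S) :
    IsSparseFamily volume (ENNReal.ofReal η) fun q : S => dCube d q.1 :=
  let ⟨E, hE, hsub, hdisj, hvol⟩ := hS
  ⟨E, hE, hsub, fun q r => hdisj q r, hvol⟩

theorem avg_eq_setAverage (Q : Set (Fin d → ℝ)) (f : (Fin d → ℝ) → ℝ) :
    avg Q f = ⨍ x in Q, f x :=
  (setAverage_eq volume f Q).symm

theorem ofReal_avg (hf : LocallyIntegrable f volume) (hf_nonneg : ∀ᵐ x, 0 ≤ f x)
    (q : ℤ × (Fin d → ℤ)) :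
    ENNReal.ofReal (avg (dCube d q) f) = ⨍⁻ x in dCube d q, ENNReal.ofReal (f x) ∂volume := by
  rw [avg_eq_setAverage, setLAverage_eq,
    ofReal_setAverage (integrableOn_dCube hf q) (ae_restrict_of_ae hf_nonneg)]

theorem setLAverage_mul_setLAverage_inv_le_a2Const (hw : IsWeight w)
    (hw' : LocallyIntegrable (fun x => (w x)⁻¹) volume) (q : ℤ × (Fin d → ℤ)) :
    (⨍⁻ x in dCube d q, ENNReal.ofReal (w x) ∂volume) *
      (⨍⁻ x in dCube d q, ENNReal.ofReal (w x)⁻¹ ∂volume) ≤ a2Const d w := by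
  have hw_nonneg : ∀ᵐ x, 0 ≤ w x := hw.2.mono fun x hx => hx.le
  have havg : 0 ≤ avg (dCube d q) w :=
    mul_nonneg (inv_nonneg.2 ENNReal.toReal_nonneg)
      (integral_nonneg_of_ae (ae_restrict_of_ae hw_nonneg))
  rw [← ofReal_avg hw.1 hw_nonneg, ← ofReal_avg hw' (hw_nonneg.mono fun x hx => inv_nonneg.2 hx),
    ← ENNReal.ofReal_mul havg]
  exact le_iSup (fun Q : {Q : Set (Fin d → ℝ) // IsCube Q} =>
    ENNReal.ofReal (avg Q.1 w * avg Q.1 fun x => (w x)⁻¹)) ⟨_, isCube_dCube q⟩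

theorem isA2Pair_dCube (hw : IsWeight w) (hw' : LocallyIntegrable (fun x => (w x)⁻¹) volume) :
    IsA2Pair volume (fun q : S => dCube d q.1) (fun x => ENNReal.ofReal (w x))
      (fun x => ENNReal.ofReal (w x)⁻¹) (a2Const d w) where
  aemeasurable_left := hw.1.aestronglyMeasurable.aemeasurable.ennreal_ofReal
  aemeasurable_right := hw'.aestronglyMeasurable.aemeasurable.ennreal_ofReal
  mul_eq_one := hw.2.mono fun x hx => by
    rw [← ENNReal.ofReal_mul hx.le, mul_inv_cancel₀ hx.ne', ENNReal.ofReal_one]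
  setLIntegral_left_ne_top q := (integrableOn_dCube hw.1 q.1).lintegral_lt_top.ne
  setLIntegral_right_ne_top q := (integrableOn_dCube hw' q.1).lintegral_lt_top.ne
  setLAverage_mul_setLAverage_le q := setLAverage_mul_setLAverage_inv_le_a2Const hw hw' q.1

theorem wLpNorm_eq_eLpNorm_withDensity {p : ℝ} (hp : 0 < p) (hw : AEMeasurable w)
    (f : (Fin d → ℝ) → ℝ) :
    wLpNorm p w f =
      eLpNorm f (ENNReal.ofReal p) (volume.withDensity fun x => ENNReal.ofReal (w x)) := by
  rw [eLpNorm_eq_lintegral_rpow_enorm_toReal (ENNReal.ofReal_pos.2 hp).ne' ENNReal.ofReal_ne_top,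
    ENNReal.toReal_ofReal hp.le, lintegral_withDensity_eq_lintegral_mul_non_measurable₀ volume
      hw.ennreal_ofReal (.of_forall fun x => ENNReal.ofReal_lt_top)]
  simp only [wLpNorm, Real.enorm_eq_ofReal_abs, Pi.mul_apply, mul_comm]

theorem wLpNorm_two_eq_eLpNorm_enorm (hw : AEMeasurable w) (f : (Fin d → ℝ) → ℝ) :
    wLpNorm 2 w f =
      eLpNorm (fun x => ‖f x‖ₑ) 2 (volume.withDensity fun x => ENNReal.ofReal (w x)) := by
  rw [wLpNorm_eq_eLpNorm_withDensity two_pos hw, ENNReal.ofReal_ofNat, eLpNorm_enorm]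

theorem enorm_avg_le_setLAverage (Q : Set (Fin d → ℝ)) (f : (Fin d → ℝ) → ℝ) :
    ‖avg Q f‖ₑ ≤ ⨍⁻ x in Q, ‖f x‖ₑ ∂volume := by
  rw [avg_eq_setAverage]
  exact enorm_integral_le_lintegral_enorm _

theorem ofReal_avg_mul_avg_mul_volume_le (Q : Set (Fin d → ℝ)) (f g : (Fin d → ℝ) → ℝ) :
    ENNReal.ofReal (avg Q (fun x => |f x|) * avg Q (fun x => |g x|) * (volume Q).toReal) ≤
      (⨍⁻ x in Q, ‖f x‖ₑ ∂volume) * (⨍⁻ x in Q, ‖g x‖ₑ ∂volume) * volume Q := by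
  refine (Real.ofReal_le_enorm _).trans ?_
  rw [enorm_mul, enorm_mul, Real.enorm_eq_ofReal ENNReal.toReal_nonneg]
  refine mul_le_mul' (mul_le_mul' ?_ ?_) ENNReal.ofReal_toReal_le
  · simpa only [Real.enorm_abs] using enorm_avg_le_setLAverage Q fun x => |f x|
  · simpa only [Real.enorm_abs] using enorm_avg_le_setLAverage Q fun x => |g x|

theorem enorm_sparseOp_le (S : Set (ℤ × (Fin d → ℤ))) (f : (Fin d → ℝ) → ℝ) (x : Fin d → ℝ) :
    ‖sparseOp d S f x‖ₑ ≤
      ∑' q : S, (dCube d q.1).indicator (fun _ => ⨍⁻ y in dCube d q.1, ‖f y‖ₑ ∂volume) x := by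
  refine enorm_tsum_le_tsum_enorm.trans (ENNReal.tsum_le_tsum fun q => ?_)
  by_cases hx : x ∈ dCube d q.1
  · simpa [hx] using enorm_avg_le_setLAverage (dCube d q.1) f
  · simp [hx]

theorem tsum_avg_mul_avg_mul_volume_le (hη : 0 < η) (hS : IsSparse d η S) (hw : IsWeight w)
    (hw' : LocallyIntegrable (fun x => (w x)⁻¹) volume) (hf : AEMeasurable f)
    (hg : AEMeasurable g) :
    ∑' q : S, ENNReal.ofReal (avg (dCube d q.1) (fun x => |f x|) *
        avg (dCube d q.1) (fun x => |g x|) * (volume (dCube d q.1)).toReal) ≤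
      ENNReal.ofReal (4 / η) * (a2Const d w * wLpNorm 2 w f * wLpNorm 2 (fun x => (w x)⁻¹) g) := by
  refine le_ofReal_div_mul_of_ofReal_mul_le hη ?_
  rw [wLpNorm_two_eq_eLpNorm_enorm hw.1.aestronglyMeasurable.aemeasurable,
    wLpNorm_two_eq_eLpNorm_enorm hw'.aestronglyMeasurable.aemeasurable,
    ENNReal.tsum_eq_iSup_sum, ENNReal.mul_iSup, ENNReal.ofReal_ofNat]
  refine iSup_le fun T => le_trans ?_ <|
    (isA2Pair_dCube hw hw').mul_sum_setLAverage_mul_setLAverage_le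
      (fun q => measurableSet_dCube q.1) isLaminar_dCube (isSparseFamily_dCube hS) T
      hf.enorm hg.enorm
  gcongr
  exact ofReal_avg_mul_avg_mul_volume_le _ f g

theorem wLpNorm_two_sparseOp_le (hη : 0 < η) (hS : IsSparse d η S) (hw : IsWeight w)
    (hw' : LocallyIntegrable (fun x => (w x)⁻¹) volume) (hf : AEMeasurable f)
    (hf_top : wLpNorm 2 w f < ∞) :
    wLpNorm 2 w (sparseOp d S f) ≤ ENNReal.ofReal (4 / η) * (a2Const d w * wLpNorm 2 w f) := by
  refine le_ofReal_div_mul_of_ofReal_mul_le hη ?_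
  have hnorm := wLpNorm_two_eq_eLpNorm_enorm hw.1.aestronglyMeasurable.aemeasurable
  rw [hnorm] at hf_top
  rw [hnorm, hnorm, ENNReal.ofReal_ofNat]
  refine le_trans ?_ <| (isA2Pair_dCube hw hw').mul_eLpNorm_tsum_indicator_setLAverage_le
    (fun q => measurableSet_dCube q.1) (fun q => volume_dCube_ne_top q.1) isLaminar_dCube
    (isSparseFamily_dCube hS) hf.enorm hf_top.ne
  gcongr
  exact eLpNorm_mono_enorm fun x => enorm_sparseOp_le S f x

end Dyadic

/-- **A₂ theorem for sparse operators, Cruz-Uribe–Martell–Pérez.** There is an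
absolute constant `C` such that for every `η`-sparse family `S`, every `w ∈ A₂`,
`f ∈ L²(w)` and `g ∈ L²(w⁻¹)`:
`∑_{Q∈S} ⟨|f|⟩_Q ⟨|g|⟩_Q |Q| ≤ (C/η)[w]_{A₂}‖f‖_{L²(w)}‖g‖_{L²(w⁻¹)}`, and consequently
`‖A_S f‖_{L²(w)} ≤ (C/η)[w]_{A₂}‖f‖_{L²(w)}`. -/
theorem sparse_A2_theorem :
    ∃ C : ℝ, 0 < C ∧
      ∀ d : ℕ, 1 ≤ d →
        ∀ η : ℝ, 0 < η → η < 1 →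
          ∀ S : Set (ℤ × (Fin d → ℤ)), IsSparse d η S →
            ∀ w f : (Fin d → ℝ) → ℝ,
              IsWeight w → MeasureTheory.LocallyIntegrable (fun x => (w x)⁻¹) volume →
              a2Const d w < ⊤ →
              Measurable f → wLpNorm 2 w f < ⊤ →
              (∀ g : (Fin d → ℝ) → ℝ,
                Measurable g → wLpNorm 2 (fun x => (w x)⁻¹) g < ⊤ →
                ∑' q : {q // q ∈ S}, ENNReal.ofReal
                    (avg (dCube d q.1) (fun x => |f x|) *
                      avg (dCube d q.1) (fun x => |g x|) * (volume (dCube d q.1)).toReal)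
                  ≤ ENNReal.ofReal (C / η) * a2Const d w *
                      wLpNorm 2 w f * wLpNorm 2 (fun x => (w x)⁻¹) g) ∧
              wLpNorm 2 w (sparseOp d S f)
                ≤ ENNReal.ofReal (C / η) * a2Const d w * wLpNorm 2 w f := by
  refine ⟨4, by norm_num, ?_⟩
  intro d _ η hη _ S hS w f hw hw' _ hf hf_top
  simp only [mul_assoc]
  refine ⟨fun g hg _ => ?_, wLpNorm_two_sparseOp_le hη hS hw hw' hf.aemeasurable hf_top⟩
  simpa only [mul_assoc] using
    tsum_avg_mul_avg_mul_volume_le hη hS hw hw' hf.aemeasurable hg.aemeasurable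

end
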